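/- Let f be a meromorphic function on ℂ with f(0) ≠ 0, ∞, let c ∈ ℂ, let 0 < δ < 1, r ≥ 1 and s > r + |c|. Then m(r, f(z+c)/f(z)) ≤ ( 2|c|/(s − r − |c|) + 2|c|^δ/(δ(1−δ) r^δ) ) · ( n(s,f) + n(s, 1/f) ) + ( 4|c|s/(s − r − |c|)² ) · ( T(s,f) + log⁺(1/|f(0)|) ), where n(s,f) and n(s,1/f) denote the number of poles and zeros, respectively, of f in |z| ≤ s, counted with multiplicity. -/

import Mathlib

open MeasureTheory Filter Topology Metric

noncomputable section

/-- Positive part of the logarithm: `log⁺ x = max (log x) 0`. -/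
def logPlus (x : ℝ) : ℝ := max (Real.log x) 0

/-- The point `r e^{iθ}` on the circle of radius `r`. -/
def circ (r θ : ℝ) : ℂ := (r : ℂ) * Complex.exp (θ * Complex.I)

/-- Nevanlinna proximity function `m(r, f)`. -/
def nevm (f : ℂ → ℂ) (r : ℝ) : ℝ :=
  (2 * Real.pi)⁻¹ * ∫ θ in (0:ℝ)..(2 * Real.pi), logPlus ‖f (circ r θ)‖

/-- Order of the pole of `f` at `x` (`0` if `f` extends analytically over `x`);
determined through the punctured neighbourhood of `x`. -/
def poleOrd (f : ℂ → ℂ) (x : ℂ) : ℕ :=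
  sInf {n : ℕ | ∃ g : ℂ → ℂ, AnalyticAt ℂ g x ∧
    ∀ᶠ w in 𝓝[≠] x, (w - x) ^ n * f w = g w}

/-- Unintegrated counting function `n(r, f)`: number of poles of `f` in `|z| ≤ r`,
counted with multiplicity. -/
def nevn (f : ℂ → ℂ) (r : ℝ) : ℕ := ∑ᶠ z ∈ closedBall (0:ℂ) r, poleOrd f z

/-- Integrated counting function `N(r, f)`. -/
def nevN (f : ℂ → ℂ) (r : ℝ) : ℝ :=
  (∫ t in (0:ℝ)..r, ((nevn f t : ℝ) - (nevn f 0 : ℝ)) / t) + (nevn f 0 : ℝ) * Real.log r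

/-- Nevanlinna characteristic `T(r, f) = m(r, f) + N(r, f)`. -/
def nevT (f : ℂ → ℂ) (r : ℝ) : ℝ := nevm f r + nevN f r

/-- A subset of `(0, ∞)` has finite logarithmic measure: `∫_E dr/r < ∞`. -/
def FinLogMeasure (E : Set ℝ) : Prop :=
  E ⊆ Set.Ioi 0 ∧ ∫⁻ r in E, ENNReal.ofReal r⁻¹ < ⊤

/-- `f` is a non-constant function. -/
def Nonconstant (f : ℂ → ℂ) : Prop := ¬ ∃ a : ℂ, ∀ z : ℂ, f z = a

/-- `f` has finite order: `limsup_{r→∞} log T(r,f) / log r < ∞`. -/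
def FiniteOrder (f : ℂ → ℂ) : Prop :=
  IsBoundedUnder (· ≤ ·) atTop fun r : ℝ => Real.log (nevT f r) / Real.log r

end

/-!
The Poisson–Jensen formula on `‖z‖ < s` writes `log ‖f w‖` as a Poisson integral of `log ‖f‖` minus
the sum, over the zeros and poles `u` of `f`, of the logarithms of the canonical factors at `u`.
Subtracting its values at `z + c` and `z` for `‖z‖ = r` bounds `log ‖f (z + c) / f z‖` by two terms.
The Poisson kernels at the two points differ by at most `2 ‖c‖ s / (s - r - ‖c‖) ^ 2`, and Jensen's
formula bounds the mean of `|log ‖f‖|` on `‖z‖ = s` by `2 (T(s, f) + log⁺ (1 / ‖f 0‖))`.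
From `δ * log x ≤ (1 + |x - 1|) ^ δ - 1 ≤ |x - 1| ^ δ`, each zero or pole contributes at most
`‖c‖ ^ δ / (δ ‖z - v‖ ^ δ) + ‖c‖ / (s - r - ‖c‖)`, where `v` is `u` or `u - c`; the circle mean of
`‖z - v‖ ^ (-δ)` is at most `r ^ (-δ) / (1 - δ)`, because after a rotation
`‖r e^{iθ} - v‖ ≥ r |sin θ|`.
-/

theorem log_norm_sub_log_norm_le {E : Type*} [NormedAddCommGroup E] {x y : E} {δ : ℝ}
    (hδ₀ : 0 < δ) (hδ₁ : δ ≤ 1) (hx : x ≠ 0) (hy : y ≠ 0) :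
    Real.log ‖x‖ - Real.log ‖y‖ ≤ (‖x - y‖ / ‖y‖) ^ δ / δ := by
  have hy' : 0 < ‖y‖ := norm_pos_iff.2 hy
  have hquot : 0 < ‖x‖ / ‖y‖ := div_pos (norm_pos_iff.2 hx) hy'
  have htri : ‖x‖ / ‖y‖ ≤ 1 + ‖x - y‖ / ‖y‖ := by
    rw [div_le_iff₀ hy', add_mul, div_mul_cancel₀ _ hy'.ne', one_mul]
    exact norm_le_norm_add_norm_sub' x y
  rw [← Real.log_div (norm_ne_zero_iff.2 hx) hy'.ne', le_div_iff₀ hδ₀, mul_comm,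
    ← Real.log_rpow hquot]
  calc Real.log ((‖x‖ / ‖y‖) ^ δ) ≤ (‖x‖ / ‖y‖) ^ δ - 1 :=
        Real.log_le_sub_one_of_pos (Real.rpow_pos_of_pos hquot δ)
    _ ≤ (1 + ‖x - y‖ / ‖y‖) ^ δ - 1 := by gcongr
    _ ≤ (1 ^ δ + (‖x - y‖ / ‖y‖) ^ δ) - 1 := by
        gcongr
        exact Real.rpow_add_le_add_rpow zero_le_one (by positivity) hδ₀.le hδ₁
    _ = (‖x - y‖ / ‖y‖) ^ δ := by rw [Real.one_rpow]; ring

theorem circleAverage_mono_off_countable {g h : ℂ → ℝ} {c : ℂ} {R : ℝ} {B : Set ℂ} (hR : R ≠ 0)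
    (hg : CircleIntegrable g c R) (hh : CircleIntegrable h c R) (hB : B.Countable)
    (hle : ∀ z ∈ sphere c |R|, z ∉ B → g z ≤ h z) :
    Real.circleAverage g c R ≤ Real.circleAverage h c R := by
  simp only [Real.circleAverage_def, smul_eq_mul]
  gcongr ?_ * ?_
  refine intervalIntegral.integral_mono_ae Real.two_pi_pos.le hg hh ?_
  filter_upwards [(hB.preimage_circleMap c hR).ae_notMem volume] with θ hθ
  exact hle _ (circleMap_mem_sphere' c R θ) hθ

theorem circleAverage_sum_mul_le {ι : Type*} {S : Finset ι} {p : ι → ℝ} {F : ι → ℂ → ℝ} {c : ℂ}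
    {R M : ℝ} (hp : ∀ i ∈ S, 0 ≤ p i) (hF : ∀ i ∈ S, CircleIntegrable (F i) c R)
    (hM : ∀ i ∈ S, Real.circleAverage (F i) c R ≤ M) :
    Real.circleAverage (fun z => ∑ i ∈ S, p i * F i z) c R ≤ M * ∑ i ∈ S, p i := by
  have hpF : ∀ i ∈ S, CircleIntegrable (fun z => p i • F i z) c R := fun i hi =>
    (hF i hi).const_smul
  simp only [← smul_eq_mul (p _)]
  rw [Real.circleAverage_fun_sum hpF, Finset.mul_sum]
  refine Finset.sum_le_sum fun i hi => ?_
  rw [Real.circleAverage_fun_smul, smul_eq_mul, mul_comm M]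
  exact mul_le_mul_of_nonneg_left (hM i hi) (hp i hi)

section SinePower

variable {δ : ℝ}

theorem abs_sin_rpow_neg_le {x : ℝ} (hδ₀ : 0 ≤ δ) (hx : x ∈ Set.Ioc 0 (Real.pi / 2)) :
    |Real.sin x| ^ (-δ) ≤ (2 / Real.pi * x) ^ (-δ) := by
  have hpos : 0 < 2 / Real.pi * x := mul_pos (by positivity) hx.1
  refine Real.rpow_le_rpow_of_nonpos hpos ?_ (neg_nonpos.2 hδ₀)
  exact (Real.mul_le_sin hx.1.le hx.2).trans (le_abs_self _)

theorem intervalIntegrable_two_div_pi_mul_rpow_neg (hδ₁ : δ < 1) :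
    IntervalIntegrable (fun x => (2 / Real.pi * x) ^ (-δ)) volume 0 (Real.pi / 2) := by
  have h : IntervalIntegrable (fun x : ℝ => x ^ (-δ)) volume 0 1 :=
    intervalIntegral.intervalIntegrable_rpow' (by linarith)
  simpa using h.comp_mul_left (c := 2 / Real.pi)

theorem intervalIntegrable_abs_sin_rpow_neg_zero_pi_div_two (hδ₀ : 0 ≤ δ) (hδ₁ : δ < 1) :
    IntervalIntegrable (fun x => |Real.sin x| ^ (-δ)) volume 0 (Real.pi / 2) := by
  refine (intervalIntegrable_two_div_pi_mul_rpow_neg hδ₁).mono_fun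
    (by fun_prop : Measurable _).aestronglyMeasurable ?_
  rw [Set.uIoc_of_le (by positivity)]
  filter_upwards [ae_restrict_mem measurableSet_Ioc] with x hx
  rw [Real.norm_of_nonneg (by positivity)]
  exact (abs_sin_rpow_neg_le hδ₀ hx).trans (le_abs_self _)

theorem integral_abs_sin_rpow_neg_zero_pi_div_two_le (hδ₀ : 0 ≤ δ) (hδ₁ : δ < 1) :
    ∫ x in 0..Real.pi / 2, |Real.sin x| ^ (-δ) ≤ Real.pi / 2 / (1 - δ) := by
  calc ∫ x in 0..Real.pi / 2, |Real.sin x| ^ (-δ)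
      ≤ ∫ x in 0..Real.pi / 2, (2 / Real.pi * x) ^ (-δ) :=
        intervalIntegral.integral_mono_on_of_le_Ioo (by positivity)
          (intervalIntegrable_abs_sin_rpow_neg_zero_pi_div_two hδ₀ hδ₁)
          (intervalIntegrable_two_div_pi_mul_rpow_neg hδ₁)
          fun x hx => abs_sin_rpow_neg_le hδ₀ (Set.Ioo_subset_Ioc_self hx)
    _ = Real.pi / 2 / (1 - δ) := by
        have hscale : 2 / Real.pi * (Real.pi / 2) = 1 := by field_simp
        rw [intervalIntegral.integral_comp_mul_left (fun x => x ^ (-δ)) (by positivity), hscale,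
          mul_zero, integral_rpow (Or.inl (by linarith)), Real.one_rpow,
          Real.zero_rpow (by linarith), smul_eq_mul, inv_div, neg_add_eq_sub, sub_zero, mul_one_div]

theorem periodic_abs_sin_rpow : Function.Periodic (fun x => |Real.sin x| ^ (-δ)) Real.pi :=
  fun x => by simp only [Real.sin_add_pi, abs_neg]

theorem intervalIntegrable_abs_sin_rpow_neg_pi_div_two_pi (hδ₀ : 0 ≤ δ) (hδ₁ : δ < 1) :
    IntervalIntegrable (fun x => |Real.sin x| ^ (-δ)) volume (Real.pi / 2) Real.pi := by
  have h := (intervalIntegrable_abs_sin_rpow_neg_zero_pi_div_two hδ₀ hδ₁).comp_sub_left Real.pi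
  simp only [Real.sin_pi_sub, sub_zero, sub_half] at h
  exact h.symm

theorem intervalIntegrable_abs_sin_rpow_neg (hδ₀ : 0 ≤ δ) (hδ₁ : δ < 1) (a b : ℝ) :
    IntervalIntegrable (fun x => |Real.sin x| ^ (-δ)) volume a b := by
  refine periodic_abs_sin_rpow.intervalIntegrable Real.pi_ne_zero (t := 0) ?_ a b
  rw [zero_add]
  exact (intervalIntegrable_abs_sin_rpow_neg_zero_pi_div_two hδ₀ hδ₁).trans
    (intervalIntegrable_abs_sin_rpow_neg_pi_div_two_pi hδ₀ hδ₁)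

theorem integral_abs_sin_rpow_neg_le (hδ₀ : 0 ≤ δ) (hδ₁ : δ < 1) :
    ∫ x in 0..2 * Real.pi, |Real.sin x| ^ (-δ) ≤ 2 * Real.pi / (1 - δ) := by
  have hint := intervalIntegrable_abs_sin_rpow_neg hδ₀ hδ₁
  have hperiod : ∫ x in 0..2 * Real.pi, |Real.sin x| ^ (-δ)
      = 2 * ∫ x in 0..Real.pi, |Real.sin x| ^ (-δ) := by
    simpa using periodic_abs_sin_rpow (δ := δ).intervalIntegral_add_zsmul_eq 2 0 hint
  have hreflect : ∫ x in Real.pi / 2..Real.pi, |Real.sin x| ^ (-δ)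
      = ∫ x in 0..Real.pi / 2, |Real.sin x| ^ (-δ) := by
    simpa [sub_half] using (intervalIntegral.integral_comp_sub_left (a := 0) (b := Real.pi / 2)
      (fun x => |Real.sin x| ^ (-δ)) Real.pi).symm
  rw [hperiod, ← intervalIntegral.integral_add_adjacent_intervals (hint 0 (Real.pi / 2))
    (hint (Real.pi / 2) Real.pi), hreflect]
  have hquarter := integral_abs_sin_rpow_neg_zero_pi_div_two_le hδ₀ hδ₁
  linear_combination 4 * hquarter

end SinePower

theorem mul_abs_sin_le_norm_circleMap_add_arg_sub (a : ℂ) {r : ℝ} (hr : 0 ≤ r) (θ : ℝ) :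
    r * |Real.sin θ| ≤ ‖circleMap 0 r (θ + a.arg) - a‖ := by
  have hrot : circleMap 0 r (θ + a.arg) - a
      = (r * Complex.exp (θ * Complex.I) - ‖a‖) * Complex.exp (a.arg * Complex.I) := by
    conv_lhs => enter [2]; rw [← Complex.norm_mul_exp_arg_mul_I a]
    rw [circleMap_zero, Complex.ofReal_add, add_mul, Complex.exp_add]
    ring
  rw [hrot, norm_mul, Complex.norm_exp_ofReal_mul_I, mul_one]
  simpa [Complex.exp_ofReal_mul_I_im, abs_mul, abs_of_nonneg hr] using
    Complex.abs_im_le_norm (r * Complex.exp (θ * Complex.I) - ‖a‖)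

section NormPower

variable {r δ : ℝ} (a : ℂ)

-- Where `sin θ = 0` and `δ > 0` the right-hand side has the junk value `0 ^ (-δ) = 0`.
theorem norm_circleMap_add_arg_sub_rpow_neg_le (hr : 0 < r) (hδ₀ : 0 ≤ δ) :
    ∀ᵐ θ : ℝ, ‖circleMap 0 r (θ + a.arg) - a‖ ^ (-δ) ≤ r ^ (-δ) * |Real.sin θ| ^ (-δ) := by
  have hzeros : {θ : ℝ | Real.sin θ = 0}.Countable :=
    (Set.countable_range fun n : ℤ => (n : ℝ) * Real.pi).mono fun θ hθ => Real.sin_eq_zero_iff.1 hθ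
  filter_upwards [hzeros.ae_notMem volume] with θ hθ
  have hsin : 0 < |Real.sin θ| := abs_pos.2 hθ
  rw [← Real.mul_rpow hr.le hsin.le]
  exact Real.rpow_le_rpow_of_nonpos (mul_pos hr hsin)
    (mul_abs_sin_le_norm_circleMap_add_arg_sub a hr.le θ) (neg_nonpos.2 hδ₀)

theorem intervalIntegrable_norm_circleMap_add_arg_sub_rpow_neg (hr : 0 < r) (hδ₀ : 0 ≤ δ)
    (hδ₁ : δ < 1) (x y : ℝ) :
    IntervalIntegrable (fun θ => ‖circleMap 0 r (θ + a.arg) - a‖ ^ (-δ)) volume x y := by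
  have : Measurable fun θ : ℝ => circleMap 0 r (θ + a.arg) :=
    (by fun_prop : Continuous _).measurable
  refine ((intervalIntegrable_abs_sin_rpow_neg hδ₀ hδ₁ x y).const_mul (r ^ (-δ))).mono_fun
    (by fun_prop : Measurable _).aestronglyMeasurable ?_
  filter_upwards [ae_restrict_of_ae (norm_circleMap_add_arg_sub_rpow_neg_le a hr hδ₀)] with θ hθ
  rw [Real.norm_of_nonneg (by positivity)]
  exact hθ.trans (le_abs_self _)

theorem circleIntegrable_norm_sub_rpow_neg (hr : 0 < r) (hδ₀ : 0 ≤ δ) (hδ₁ : δ < 1) :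
    CircleIntegrable (fun z => ‖z - a‖ ^ (-δ)) 0 r := by
  have h := (intervalIntegrable_norm_circleMap_add_arg_sub_rpow_neg a hr hδ₀ hδ₁
    (0 - a.arg) (2 * Real.pi - a.arg)).comp_sub_right a.arg
  simp only [sub_add_cancel] at h
  exact h

theorem circleAverage_norm_sub_rpow_neg_le (hr : 0 < r) (hδ₀ : 0 ≤ δ) (hδ₁ : δ < 1) :
    Real.circleAverage (fun z => ‖z - a‖ ^ (-δ)) 0 r ≤ r ^ (-δ) / (1 - δ) := by
  rw [Real.circleAverage_eq_integral_add a.arg, smul_eq_mul,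
    inv_mul_le_iff₀ Real.two_pi_pos]
  calc ∫ θ in 0..2 * Real.pi, ‖circleMap 0 r (θ + a.arg) - a‖ ^ (-δ)
      ≤ ∫ θ in 0..2 * Real.pi, r ^ (-δ) * |Real.sin θ| ^ (-δ) :=
        intervalIntegral.integral_mono_ae Real.two_pi_pos.le
          (intervalIntegrable_norm_circleMap_add_arg_sub_rpow_neg a hr hδ₀ hδ₁ _ _)
          ((intervalIntegrable_abs_sin_rpow_neg hδ₀ hδ₁ _ _).const_mul _)
          (norm_circleMap_add_arg_sub_rpow_neg_le a hr hδ₀)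
    _ ≤ r ^ (-δ) * (2 * Real.pi / (1 - δ)) := by
        rw [intervalIntegral.integral_const_mul]
        gcongr
        exact integral_abs_sin_rpow_neg_le hδ₀ hδ₁
    _ = 2 * Real.pi * (r ^ (-δ) / (1 - δ)) := by ring

end NormPower

section PoleOrder

variable {f : ℂ → ℂ} {x : ℂ}

theorem exists_analyticAt_eventually_eq_iff (hf : MeromorphicAt f x) :
    (∃ g : ℂ → ℂ, AnalyticAt ℂ g x ∧ ∀ᶠ w in 𝓝[≠] x, f w = g w) ↔
      0 ≤ meromorphicOrderAt f x := by
  constructor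
  · rintro ⟨g, hg, hfg⟩
    rw [meromorphicOrderAt_congr hfg]
    exact hg.meromorphicOrderAt_nonneg
  · intro hnonneg
    have heq : ∀ᶠ w in 𝓝[≠] x, f w = toMeromorphicNFAt f x w := hf.eq_nhdsNE_toMeromorphicNFAt
    refine ⟨toMeromorphicNFAt f x, ?_, heq⟩
    rwa [← meromorphicNFAt_toMeromorphicNFAt.meromorphicOrderAt_nonneg_iff_analyticAt,
      ← meromorphicOrderAt_congr heq]

theorem meromorphicOrderAt_sub_pow_mul (hf : MeromorphicAt f x) (n : ℕ) :
    meromorphicOrderAt (fun w => (w - x) ^ n * f w) x = n + meromorphicOrderAt f x := by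
  have hpow : meromorphicOrderAt (fun w => (w - x) ^ n) x = n := by
    have h := meromorphicOrderAt_pow (f := fun w => w - x) (x := x) (by fun_prop) (n := n)
    rwa [meromorphicOrderAt_id_sub_const, mul_one] at h
  rw [fun_meromorphicOrderAt_mul (by fun_prop) hf, hpow]

-- If `f` vanishes identically near `x`, both sides are `0` because `untop₀ ⊤ = 0`.
theorem poleOrd_eq_toNat (hf : MeromorphicAt f x) :
    poleOrd f x = (-(meromorphicOrderAt f x).untop₀).toNat := by
  have hset : {n : ℕ | ∃ g : ℂ → ℂ, AnalyticAt ℂ g x ∧ ∀ᶠ w in 𝓝[≠] x, (w - x) ^ n * f w = g w}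
      = Set.Ici (-(meromorphicOrderAt f x).untop₀).toNat := by
    ext n
    rw [Set.mem_ofPred_eq, exists_analyticAt_eventually_eq_iff (by fun_prop),
      meromorphicOrderAt_sub_pow_mul hf, Set.mem_Ici, Int.toNat_le, neg_le_iff_add_nonneg]
    cases h : meromorphicOrderAt f x with
    | top => simp
    | coe k => rw [WithTop.untop₀_coe]; exact_mod_cast Iff.rfl
  rw [poleOrd, hset, csInf_Ici]

theorem divisor_eq_poleOrd_inv_sub_poleOrd {U : Set ℂ} (hf : MeromorphicOn f U) (hx : x ∈ U) :
    MeromorphicOn.divisor f U x = (poleOrd (fun z => (f z)⁻¹) x : ℤ) - poleOrd f x := by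
  have hinv : meromorphicOrderAt (fun z => (f z)⁻¹) x = -meromorphicOrderAt f x :=
    meromorphicOrderAt_inv
  rw [MeromorphicOn.divisor_apply hf hx, poleOrd_eq_toNat (hf x hx),
    poleOrd_eq_toNat (hf x hx).fun_inv, hinv, WithTop.untop₀_neg, neg_neg,
    Int.toNat_sub_toNat_neg]

theorem divisor_ne_zero_of_poleOrd_ne_zero {U : Set ℂ} (hf : MeromorphicOn f U) (hx : x ∈ U)
    (h : poleOrd f x ≠ 0) : MeromorphicOn.divisor f U x ≠ 0 := by
  rw [MeromorphicOn.divisor_apply hf hx]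
  intro hzero
  rw [poleOrd_eq_toNat (hf x hx), hzero] at h
  exact h rfl

end PoleOrder

section Counting

variable {f : ℂ → ℂ} {s : ℝ} {S : Finset ℂ}

theorem nevn_eq_sum {t : ℝ} (hS : ∀ u, ‖u‖ ≤ t → poleOrd f u ≠ 0 → u ∈ S) :
    nevn f t = ∑ u ∈ S with ‖u‖ ≤ t, poleOrd f u := by
  refine finsum_mem_eq_sum_of_inter_support_eq _ ?_
  ext u
  simp only [Set.mem_inter_iff, mem_closedBall_zero_iff, Function.mem_support, Finset.coe_filter,
    Set.mem_ofPred_eq]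
  exact ⟨fun h => ⟨⟨hS u h.1 h.2, h.1⟩, h.2⟩, fun h => ⟨h.1.2, h.2⟩⟩

theorem Ici_inter_Ioc_zero {a : ℝ} (ha : 0 < a) : Set.Ici a ∩ Set.Ioc 0 s = Set.Icc a s := by
  ext t
  exact ⟨fun h => ⟨h.1, h.2.2⟩, fun h => ⟨h.1, ha.trans_le h.1, h.2⟩⟩

theorem intervalIntegrable_indicator_Ici_inv {a : ℝ} (ha : a ∈ Set.Ioc 0 s) :
    IntervalIntegrable ((Set.Ici a).indicator fun t => t⁻¹) volume 0 s := by
  rw [intervalIntegrable_iff_integrableOn_Ioc_of_le (ha.1.le.trans ha.2),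
    integrableOn_indicator_iff measurableSet_Ici, Ici_inter_Ioc_zero ha.1]
  exact (continuousOn_inv₀.mono fun t ht => (ha.1.trans_le ht.1).ne').integrableOn_Icc

theorem integral_indicator_Ici_inv {a : ℝ} (ha : a ∈ Set.Ioc 0 s) :
    ∫ t in 0..s, (Set.Ici a).indicator (fun t => t⁻¹) t = Real.log (s * a⁻¹) := by
  have hs : 0 < s := ha.1.trans_le ha.2
  rw [intervalIntegral.integral_of_le hs.le, setIntegral_indicator measurableSet_Ici,
    Set.inter_comm, Ici_inter_Ioc_zero ha.1, integral_Icc_eq_integral_Ioc,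
    ← intervalIntegral.integral_of_le ha.2, integral_inv_of_pos ha.1 hs, div_eq_mul_inv]

theorem nevN_eq_sum (hS : ∀ u, ‖u‖ ≤ s → poleOrd f u ≠ 0 → u ∈ S)
    (hnorm : ∀ u ∈ S, ‖u‖ ∈ Set.Ioc 0 s) (hs : 0 ≤ s) :
    nevN f s = ∑ u ∈ S, (poleOrd f u : ℝ) * Real.log (s * ‖u‖⁻¹) := by
  have hcount : ∀ t ≤ s, nevn f t = ∑ u ∈ S with ‖u‖ ≤ t, poleOrd f u := fun t ht =>
    nevn_eq_sum fun u hu => hS u (hu.trans ht)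
  have hzero : nevn f 0 = 0 := by
    rw [hcount 0 hs, Finset.sum_filter]
    exact Finset.sum_eq_zero fun u hu => if_neg (not_le.2 (hnorm u hu).1)
  have hintegrand : ∀ t ∈ Set.uIcc 0 s, ((nevn f t : ℝ) - (nevn f 0 : ℝ)) / t
      = ∑ u ∈ S, (poleOrd f u : ℝ) * (Set.Ici ‖u‖).indicator (fun t => t⁻¹) t := by
    intro t ht
    rw [Set.uIcc_of_le hs] at ht
    rw [hzero, hcount t ht.2, Nat.cast_zero, sub_zero, Nat.cast_sum, Finset.sum_filter,
      Finset.sum_div]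
    refine Finset.sum_congr rfl fun u _ => ?_
    by_cases hut : ‖u‖ ≤ t <;> simp [hut, div_eq_mul_inv]
  rw [nevN, intervalIntegral.integral_congr hintegrand,
    intervalIntegral.integral_finsetSum fun u hu =>
      (intervalIntegrable_indicator_Ici_inv (hnorm u hu)).const_mul _,
    hzero, Nat.cast_zero, zero_mul, add_zero]
  refine Finset.sum_congr rfl fun u hu => ?_
  rw [intervalIntegral.integral_const_mul, integral_indicator_Ici_inv (hnorm u hu)]

end Counting

/-- The zeros and poles of `f` in the closed disc `‖z‖ ≤ s`: the finite index set of the sums in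
the Jensen and Poisson–Jensen formulas. -/
noncomputable def zerosPoles (f : ℂ → ℂ) (s : ℝ) : Finset ℂ :=
  ((MeromorphicOn.divisor f (closedBall 0 s)).finiteSupport (isCompact_closedBall 0 s)).toFinset

section ZerosPoles

variable {f : ℂ → ℂ} {s : ℝ} {u : ℂ}

theorem mem_zerosPoles : u ∈ zerosPoles f s ↔ MeromorphicOn.divisor f (closedBall 0 s) u ≠ 0 := by
  simp [zerosPoles]

theorem zerosPoles_inv : zerosPoles (fun z => (f z)⁻¹) s = zerosPoles f s := by
  ext u
  rw [mem_zerosPoles, mem_zerosPoles, MeromorphicOn.divisor_fun_inv]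
  simp

theorem norm_le_of_mem_zerosPoles (hu : u ∈ zerosPoles f s) : ‖u‖ ≤ s := by
  by_contra h
  exact mem_zerosPoles.1 hu
    (Function.locallyFinsuppWithin.apply_eq_zero_of_notMem _ (by simpa using h))

theorem ne_zero_of_mem_zerosPoles (hf : MeromorphicOn f (closedBall 0 s))
    (h0 : AnalyticAt ℂ f 0) (hf0 : f 0 ≠ 0) (hu : u ∈ zerosPoles f s) : u ≠ 0 := by
  rintro rfl
  apply mem_zerosPoles.1 hu
  have hs : 0 ≤ s := by simpa using norm_le_of_mem_zerosPoles hu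
  rw [MeromorphicOn.divisor_apply hf (by simpa using hs),
    h0.meromorphicNFAt.meromorphicOrderAt_eq_zero_iff.2 hf0, WithTop.untop₀_zero]

theorem mem_zerosPoles_of_poleOrd_ne_zero (hf : MeromorphicOn f (closedBall 0 s)) (hu : ‖u‖ ≤ s)
    (h : poleOrd f u ≠ 0) : u ∈ zerosPoles f s :=
  mem_zerosPoles.2 (divisor_ne_zero_of_poleOrd_ne_zero hf (by simpa using hu) h)

theorem divisor_eq_of_mem_zerosPoles (hf : MeromorphicOn f (closedBall 0 s))
    (hu : u ∈ zerosPoles f s) :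
    (MeromorphicOn.divisor f (closedBall 0 s) u : ℝ)
      = poleOrd (fun z => (f z)⁻¹) u - poleOrd f u := by
  exact_mod_cast divisor_eq_poleOrd_inv_sub_poleOrd hf
    (by simpa using norm_le_of_mem_zerosPoles hu)

theorem nevn_eq_sum_zerosPoles (hf : MeromorphicOn f (closedBall 0 s)) :
    (nevn f s : ℝ) = ∑ u ∈ zerosPoles f s, (poleOrd f u : ℝ) := by
  rw [nevn_eq_sum fun u => mem_zerosPoles_of_poleOrd_ne_zero hf,
    Finset.filter_true_of_mem fun u => norm_le_of_mem_zerosPoles, Nat.cast_sum]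

theorem nevn_inv_eq_sum_zerosPoles (hf : MeromorphicOn f (closedBall 0 s)) :
    (nevn (fun z => (f z)⁻¹) s : ℝ)
      = ∑ u ∈ zerosPoles f s, (poleOrd (fun z => (f z)⁻¹) u : ℝ) := by
  rw [nevn_eq_sum_zerosPoles fun x hx => (hf x hx).fun_inv, zerosPoles_inv]

theorem finsum_divisor_smul {E : Type*} [AddCommGroup E] [Module ℝ E] (g : ℂ → E) :
    ∑ᶠ u, (MeromorphicOn.divisor f (closedBall 0 s) u : ℝ) • g u
      = ∑ u ∈ zerosPoles f s, (MeromorphicOn.divisor f (closedBall 0 s) u : ℝ) • g u := by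
  refine finsum_eq_sum_of_support_subset _ fun u hu => mem_zerosPoles.2 fun h => hu ?_
  simp only [h, Int.cast_zero, zero_smul]

end ZerosPoles

theorem logPlus_eq_posLog (x : ℝ) : logPlus x = Real.posLog x :=
  max_comm _ _

theorem nevm_eq_circleAverage (f : ℂ → ℂ) (r : ℝ) :
    nevm f r = Real.circleAverage (fun z => logPlus ‖f z‖) 0 r := by
  simp only [nevm, circ, Real.circleAverage_def, circleMap_zero, smul_eq_mul]

theorem circleIntegrable_logPlus_norm {f : ℂ → ℂ} {r : ℝ} (hf : MeromorphicOn f (sphere 0 |r|)) :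
    CircleIntegrable (fun z => logPlus ‖f z‖) 0 r := by
  simp only [logPlus_eq_posLog]
  exact hf.circleIntegrable_posLog_norm

theorem circleAverage_abs_log_norm {f : ℂ → ℂ} {r : ℝ} (hf : MeromorphicOn f (sphere 0 |r|)) :
    Real.circleAverage (fun z => |Real.log ‖f z‖|) 0 r
      = 2 * nevm f r - Real.circleAverage (fun z => Real.log ‖f z‖) 0 r := by
  have habs : ∀ x : ℝ, |Real.log x| = (2 : ℝ) • logPlus x - Real.log x := by
    intro x
    rw [logPlus_eq_posLog, ← Real.half_mul_log_add_log_abs, smul_eq_mul]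
    ring
  have hint : CircleIntegrable (fun z => (2 : ℝ) • logPlus ‖f z‖) 0 r :=
    (circleIntegrable_logPlus_norm hf).const_smul
  simp only [habs]
  rw [Real.circleAverage_fun_sub hint hf.circleIntegrable_log_norm, Real.circleAverage_fun_smul,
    nevm_eq_circleAverage, smul_eq_mul]

section Jensen

variable {f : ℂ → ℂ} {s : ℝ}

theorem nevN_eq_sum_zerosPoles (hs : 0 ≤ s) (hf : MeromorphicOn f (closedBall 0 s))
    (h0 : AnalyticAt ℂ f 0) (hf0 : f 0 ≠ 0) :
    nevN f s = ∑ u ∈ zerosPoles f s, (poleOrd f u : ℝ) * Real.log (s * ‖u‖⁻¹) :=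
  nevN_eq_sum (fun _ => mem_zerosPoles_of_poleOrd_ne_zero hf)
    (fun _ hu => ⟨norm_pos_iff.2 (ne_zero_of_mem_zerosPoles hf h0 hf0 hu),
      norm_le_of_mem_zerosPoles hu⟩) hs

theorem nevN_nonneg (hs : 0 ≤ s) (hf : MeromorphicOn f (closedBall 0 s))
    (h0 : AnalyticAt ℂ f 0) (hf0 : f 0 ≠ 0) : 0 ≤ nevN f s := by
  rw [nevN_eq_sum_zerosPoles hs hf h0 hf0]
  refine Finset.sum_nonneg fun u hu => mul_nonneg (Nat.cast_nonneg _) (Real.log_nonneg ?_)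
  have hu₀ : 0 < ‖u‖ := norm_pos_iff.2 (ne_zero_of_mem_zerosPoles hf h0 hf0 hu)
  rw [← div_eq_mul_inv, one_le_div hu₀]
  exact norm_le_of_mem_zerosPoles hu

theorem circleAverage_log_norm_eq_nevN_inv_sub_nevN (hs : 0 < s)
    (hf : MeromorphicOn f (closedBall 0 s)) (h0 : AnalyticAt ℂ f 0) (hf0 : f 0 ≠ 0) :
    Real.circleAverage (fun z => Real.log ‖f z‖) 0 s
      = nevN (fun z => (f z)⁻¹) s - nevN f s + Real.log ‖f 0‖ := by
  have hf_inv : MeromorphicOn (fun z => (f z)⁻¹) (closedBall 0 s) := fun x hx => (hf x hx).fun_inv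
  have hdiv0 : MeromorphicOn.divisor f (closedBall 0 s) 0 = 0 := by
    by_contra h
    exact ne_zero_of_mem_zerosPoles hf h0 hf0 (mem_zerosPoles.2 h) rfl
  have hJensen := MeromorphicOn.circleAverage_log_norm (f := f) (c := 0) (R := s) hs.ne'
    (by rwa [abs_of_pos hs])
  rw [abs_of_pos hs] at hJensen
  simp only [zero_sub, norm_neg, ← smul_eq_mul (Int.cast _)] at hJensen
  rw [finsum_divisor_smul, hdiv0, h0.meromorphicTrailingCoeffAt_of_ne_zero hf0] at hJensen
  rw [hJensen, nevN_eq_sum_zerosPoles hs.le hf h0 hf0,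
    nevN_eq_sum_zerosPoles hs.le hf_inv (h0.fun_inv hf0) (inv_ne_zero hf0), zerosPoles_inv,
    ← Finset.sum_sub_distrib, Int.cast_zero, zero_smul, add_zero]
  congr 1
  refine Finset.sum_congr rfl fun u hu => ?_
  rw [divisor_eq_of_mem_zerosPoles hf hu, smul_eq_mul, sub_mul]

theorem circleAverage_abs_log_norm_le (hs : 0 < s) (hf : MeromorphicOn f (closedBall 0 s))
    (h0 : AnalyticAt ℂ f 0) (hf0 : f 0 ≠ 0) :
    Real.circleAverage (fun z => |Real.log ‖f z‖|) 0 s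
      ≤ 2 * (nevT f s + logPlus (1 / ‖f 0‖)) := by
  have hsphere : MeromorphicOn f (sphere 0 |s|) := by
    rw [abs_of_pos hs]
    exact fun z hz => hf z (sphere_subset_closedBall hz)
  have hN : 0 ≤ nevN f s := nevN_nonneg hs.le hf h0 hf0
  have hN_inv : 0 ≤ nevN (fun z => (f z)⁻¹) s :=
    nevN_nonneg hs.le (fun x hx => (hf x hx).fun_inv) (h0.fun_inv hf0) (inv_ne_zero hf0)
  have hlog : -Real.log ‖f 0‖ ≤ logPlus (1 / ‖f 0‖) := by
    rw [logPlus, one_div, Real.log_inv]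
    exact le_max_left _ _
  have hlogPlus : 0 ≤ logPlus (1 / ‖f 0‖) := le_max_right _ _
  rw [circleAverage_abs_log_norm hsphere,
    circleAverage_log_norm_eq_nevN_inv_sub_nevN hs hf h0 hf0, nevT]
  linarith

end Jensen

/-- The Poisson integral at `w` of boundary values `φ` on the circle `‖z‖ = s`. -/
noncomputable def poissonIntegral (s : ℝ) (φ : ℂ → ℝ) (w : ℂ) : ℝ :=
  Real.circleAverage (poissonKernel 0 w • φ) 0 s

section PoissonIntegral

variable {s : ℝ} {w z : ℂ} {φ ψ : ℂ → ℝ}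

theorem continuousOn_poissonKernel_sphere (hw : w ∈ ball 0 s) :
    ContinuousOn (poissonKernel 0 w) (sphere 0 |s|) := by
  rw [poissonKernel_eq_re_herglotzRieszKernel]
  exact Complex.continuous_re.comp_continuousOn (continuousOn_herglotzRieszKernel_sphere hw)

theorem circleIntegrable_poissonKernel_smul (hφ : CircleIntegrable φ 0 s) (hw : w ∈ ball 0 s) :
    CircleIntegrable (poissonKernel 0 w • φ) 0 s :=
  hφ.continuousOn_smul (continuousOn_poissonKernel_sphere hw)

theorem poissonIntegral_add (hφ : CircleIntegrable φ 0 s) (hψ : CircleIntegrable ψ 0 s)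
    (hw : w ∈ ball 0 s) :
    poissonIntegral s (φ + ψ) w = poissonIntegral s φ w + poissonIntegral s ψ w := by
  rw [poissonIntegral, smul_add,
    Real.circleAverage_add (circleIntegrable_poissonKernel_smul hφ hw)
      (circleIntegrable_poissonKernel_smul hψ hw)]
  rfl

theorem poissonIntegral_sum_smul {ι : Type*} {S : Finset ι} (a : ι → ℝ) {Φ : ι → ℂ → ℝ}
    (hΦ : ∀ i ∈ S, CircleIntegrable (Φ i) 0 s) (hw : w ∈ ball 0 s) :
    poissonIntegral s (∑ i ∈ S, a i • Φ i) w = ∑ i ∈ S, a i * poissonIntegral s (Φ i) w := by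
  rw [poissonIntegral, Finset.smul_sum, Real.circleAverage_sum fun i hi =>
    circleIntegrable_poissonKernel_smul (hΦ i hi).const_smul hw]
  refine Finset.sum_congr rfl fun i _ => ?_
  rw [smul_comm, Real.circleAverage_smul, smul_eq_mul, poissonIntegral]

theorem abs_poissonKernel_sub_le {x : ℂ} (hw : ‖w‖ < ‖x‖) (hz : ‖z‖ < ‖x‖) :
    |poissonKernel 0 w x - poissonKernel 0 z x|
      ≤ 2 * ‖w - z‖ * ‖x‖ / ((‖x‖ - ‖w‖) * (‖x‖ - ‖z‖)) := by
  have hxw : 0 < ‖x‖ - ‖w‖ := sub_pos.2 hw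
  have hxz : 0 < ‖x‖ - ‖z‖ := sub_pos.2 hz
  have hxw' : x - w ≠ 0 := norm_pos_iff.1 (hxw.trans_le (norm_sub_norm_le x w))
  have hxz' : x - z ≠ 0 := norm_pos_iff.1 (hxz.trans_le (norm_sub_norm_le x z))
  have hkernel : herglotzRieszKernel 0 w x - herglotzRieszKernel 0 z x
      = 2 * (w - z) * x / ((x - w) * (x - z)) := by
    simp only [herglotzRieszKernel_def, sub_zero]
    rw [div_sub_div _ _ hxw' hxz']
    congr 1
    ring
  simp only [poissonKernel_eq_re_herglotzRieszKernel, Function.comp_apply]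
  rw [← Complex.sub_re, hkernel]
  refine (Complex.abs_re_le_norm _).trans ?_
  rw [norm_div, norm_mul, norm_mul, norm_mul, Complex.norm_two]
  gcongr <;> exact norm_sub_norm_le _ _

theorem abs_poissonIntegral_sub_le (hφ : CircleIntegrable φ 0 s) (hw : w ∈ ball 0 s)
    (hz : z ∈ ball 0 s) :
    |poissonIntegral s φ w - poissonIntegral s φ z|
      ≤ 2 * ‖w - z‖ * s / ((s - ‖w‖) * (s - ‖z‖)) * Real.circleAverage (fun x => |φ x|) 0 s := by
  have hs : 0 < s := pos_of_mem_ball hw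
  have hw_int := circleIntegrable_poissonKernel_smul hφ hw
  have hz_int := circleIntegrable_poissonKernel_smul hφ hz
  rw [poissonIntegral, poissonIntegral, ← Real.circleAverage_sub hw_int hz_int, ← smul_eq_mul,
    ← Real.circleAverage_fun_smul]
  refine Real.abs_circleAverage_le_circleAverage_abs.trans
    (Real.circleAverage_mono (hw_int.sub hz_int).abs hφ.abs.const_smul fun x hx => ?_)
  have hx : ‖x‖ = s := by simpa [abs_of_pos hs] using hx
  rw [← hx] at hw hz ⊢
  change |poissonKernel 0 w x * φ x - poissonKernel 0 z x * φ x| ≤ _ * |φ x|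
  rw [← sub_mul, abs_mul]
  gcongr
  exact abs_poissonKernel_sub_le (by simpa using hw) (by simpa using hz)

end PoissonIntegral

/-- The bound `h ^ δ / δ * ‖x‖ ^ (-δ) + h / d` for the increment of `log |B|`, where `B` is the
canonical factor with pole `u` of the disc `‖z‖ < s`, between points `z` and `w` at distance `h`:
here `x = z - u` and `d` is a lower bound for the distance from `w` to the circle `‖z‖ = s`. -/
noncomputable def factorIncrementBound (δ h d : ℝ) (x : ℂ) : ℝ :=
  h ^ δ / δ * ‖x‖ ^ (-δ) + h / d

section CanonicalFactor

variable {s : ℝ} {u w z : ℂ}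

theorem sq_sub_norm_mul_norm_le (s : ℝ) (u w : ℂ) :
    s ^ 2 - ‖u‖ * ‖w‖ ≤ ‖(s : ℂ) ^ 2 - (starRingEnd ℂ) u * w‖ := by
  have h := norm_sub_norm_le ((s : ℂ) ^ 2) ((starRingEnd ℂ) u * w)
  rwa [norm_mul, Complex.norm_conj, norm_pow, Complex.norm_real, Real.norm_eq_abs, sq_abs] at h

theorem mul_sub_norm_le (hu : ‖u‖ ≤ s) :
    s * (s - ‖w‖) ≤ ‖(s : ℂ) ^ 2 - (starRingEnd ℂ) u * w‖ := by
  have h := mul_le_mul_of_nonneg_right hu (norm_nonneg w)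
  linarith [sq_sub_norm_mul_norm_le s u w]

theorem sq_sub_conj_mul_ne_zero (hu : ‖u‖ ≤ s) (hw : w ∈ ball 0 s) :
    (s : ℂ) ^ 2 - (starRingEnd ℂ) u * w ≠ 0 := by
  have hw' : 0 < s - ‖w‖ := sub_pos.2 (by simpa using hw)
  exact norm_pos_iff.1 ((mul_pos (pos_of_mem_ball hw) hw').trans_le (mul_sub_norm_le hu))

theorem log_norm_canonicalFactor (hu : ‖u‖ ≤ s) (hw : w ∈ ball 0 s) (hwu : w ≠ u) :
    Real.log ‖Complex.canonicalFactor s u w‖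
      = Real.log ‖(s : ℂ) ^ 2 - (starRingEnd ℂ) u * w‖ - Real.log s - Real.log ‖w - u‖ := by
  have hs : 0 < s := pos_of_mem_ball hw
  rw [Complex.canonicalFactor_apply, norm_div, norm_mul, Complex.norm_of_nonneg hs.le,
    Real.log_div (norm_ne_zero_iff.2 (sq_sub_conj_mul_ne_zero hu hw)) (by
      simpa [hs.ne', sub_eq_zero] using hwu),
    Real.log_mul hs.ne' (norm_ne_zero_iff.2 (sub_ne_zero.2 hwu)), sub_sub]

theorem log_norm_canonicalFactor_sub_le {δ : ℝ} (hδ₀ : 0 < δ) (hδ₁ : δ ≤ 1) (hu : ‖u‖ ≤ s)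
    (hw : w ∈ ball 0 s) (hz : z ∈ ball 0 s) (hwu : w ≠ u) (hzu : z ≠ u) :
    Real.log ‖Complex.canonicalFactor s u z‖ - Real.log ‖Complex.canonicalFactor s u w‖
      ≤ factorIncrementBound δ ‖w - z‖ (s - ‖w‖) (z - u) := by
  have hs : 0 < s := pos_of_mem_ball hw
  have hws : 0 < s - ‖w‖ := sub_pos.2 (by simpa using hw)
  have hden : Real.log ‖w - u‖ - Real.log ‖z - u‖ ≤ ‖w - z‖ ^ δ / δ * ‖z - u‖ ^ (-δ) := by
    refine (log_norm_sub_log_norm_le hδ₀ hδ₁ (sub_ne_zero.2 hwu) (sub_ne_zero.2 hzu)).trans_eq ?_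
    rw [sub_sub_sub_cancel_right, Real.div_rpow (norm_nonneg _) (norm_nonneg _),
      Real.rpow_neg (norm_nonneg _)]
    ring
  have hnum : Real.log ‖(s : ℂ) ^ 2 - (starRingEnd ℂ) u * z‖
      - Real.log ‖(s : ℂ) ^ 2 - (starRingEnd ℂ) u * w‖ ≤ ‖w - z‖ / (s - ‖w‖) := by
    refine (log_norm_sub_log_norm_le one_pos le_rfl (sq_sub_conj_mul_ne_zero hu hz)
      (sq_sub_conj_mul_ne_zero hu hw)).trans ?_
    rw [Real.rpow_one, div_one, sub_sub_sub_cancel_left, ← mul_sub, norm_mul, Complex.norm_conj]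
    calc ‖u‖ * ‖w - z‖ / ‖(s : ℂ) ^ 2 - (starRingEnd ℂ) u * w‖
        ≤ s * ‖w - z‖ / (s * (s - ‖w‖)) := by
          gcongr
          exact mul_sub_norm_le hu
      _ = ‖w - z‖ / (s - ‖w‖) := mul_div_mul_left _ _ hs.ne'
  rw [log_norm_canonicalFactor hu hw hwu, log_norm_canonicalFactor hu hz hzu,
    factorIncrementBound]
  linarith

theorem norm_sq_sub_conj_mul_of_norm_eq_left (hu : ‖u‖ = s) :
    ‖(s : ℂ) ^ 2 - (starRingEnd ℂ) u * w‖ = s * ‖w - u‖ := by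
  rw [← hu, ← Complex.conj_mul', ← mul_sub, norm_mul, Complex.norm_conj, norm_sub_rev]

theorem norm_sq_sub_conj_mul_of_norm_eq_right (hw : ‖w‖ = s) :
    ‖(s : ℂ) ^ 2 - (starRingEnd ℂ) u * w‖ = s * ‖w - u‖ := by
  rw [← hw, ← Complex.conj_mul', ← sub_mul, ← map_sub, norm_mul, Complex.norm_conj, mul_comm]

theorem harmonicAt_log_norm_sq_sub_conj_mul_div (hu : ‖u‖ < s) (hz : ‖z‖ ≤ s) :
    InnerProductSpace.HarmonicAt
      (fun z => Real.log ‖((s : ℂ) ^ 2 - (starRingEnd ℂ) u * z) / s‖) z := by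
  have hs : 0 < s := (norm_nonneg u).trans_lt hu
  have hpos : 0 < ‖(s : ℂ) ^ 2 - (starRingEnd ℂ) u * z‖ := by
    nlinarith [sq_sub_norm_mul_norm_le s u z, mul_le_mul_of_nonneg_left hz (norm_nonneg u)]
  refine AnalyticAt.harmonicAt_log_norm (f := fun z => ((s : ℂ) ^ 2 - (starRingEnd ℂ) u * z) / s)
    (by fun_prop) (div_ne_zero (norm_pos_iff.1 hpos) ?_)
  exact_mod_cast hs.ne'

theorem poissonIntegral_log_norm_sub (hu : ‖u‖ ≤ s) (hw : w ∈ ball 0 s) :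
    poissonIntegral s (fun z => Real.log ‖z - u‖) w
      = Real.log ‖(s : ℂ) ^ 2 - (starRingEnd ℂ) u * w‖ - Real.log s := by
  have hs : 0 < s := pos_of_mem_ball hw
  rcases hu.lt_or_eq with hu | hu
  · have hcircle : poissonIntegral s (fun z => Real.log ‖z - u‖) w
        = poissonIntegral s
          (fun z => Real.log ‖((s : ℂ) ^ 2 - (starRingEnd ℂ) u * z) / s‖) w := by
      refine Real.circleAverage_congr_sphere fun z hz => ?_
      have hz : ‖z‖ = s := by simpa [abs_of_pos hs] using hz
      simp only [Pi.smul_apply', norm_div, norm_sq_sub_conj_mul_of_norm_eq_right hz,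
        Complex.norm_of_nonneg hs.le, mul_div_cancel_left₀ _ hs.ne']
    rw [hcircle, poissonIntegral,
      InnerProductSpace.HarmonicOnNhd.circleAverage_poissonKernel_smul (fun z hz =>
        harmonicAt_log_norm_sq_sub_conj_mul_div hu (by simpa using hz)) hw,
      norm_div, Complex.norm_of_nonneg hs.le,
      Real.log_div (norm_ne_zero_iff.2 (sq_sub_conj_mul_ne_zero hu.le hw)) hs.ne']
  · have hwu : w ≠ u := by
      rintro rfl
      exact hu.not_lt (by simpa using hw)
    rw [norm_sq_sub_conj_mul_of_norm_eq_left hu,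
      Real.log_mul hs.ne' (norm_ne_zero_iff.2 (sub_ne_zero.2 hwu)), add_sub_cancel_left,
      poissonIntegral, poissonKernel_eq_re_herglotzRieszKernel]
    exact circleAverage_re_herglotzRieszKernel_mul_log (by simpa using hu) hw

end CanonicalFactor

/-- The right-hand side of the Poisson–Jensen formula for `log ‖f w‖` on the disc `‖w‖ < s`;
`Complex.canonicalFactor s u` is the reciprocal of the Blaschke factor with zero `u`. -/
noncomputable def poissonJensen (f : ℂ → ℂ) (s : ℝ) (w : ℂ) : ℝ :=
  poissonIntegral s (fun z => Real.log ‖f z‖) w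
    - ∑ u ∈ zerosPoles f s,
      (MeromorphicOn.divisor f (closedBall 0 s) u : ℝ) * Real.log ‖Complex.canonicalFactor s u w‖

section PoissonJensen

variable {f g : ℂ → ℂ} {s : ℝ} {w : ℂ}

theorem meromorphicOrderAt_ne_top_of_apply_zero_ne_zero (hf : MeromorphicOn f (closedBall 0 s))
    (h0 : AnalyticAt ℂ f 0) (hf0 : f 0 ≠ 0) (u : closedBall (0 : ℂ) s) :
    meromorphicOrderAt f u ≠ ⊤ := by
  have hs : 0 ≤ s := nonempty_closedBall.1 ⟨_, u.2⟩
  refine (hf.exists_meromorphicOrderAt_ne_top_iff_forall (isConnected_closedBall hs)).1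
    ⟨⟨0, by simpa using hs⟩, ?_⟩ u
  rw [h0.meromorphicNFAt.meromorphicOrderAt_eq_zero_iff.2 hf0]
  exact WithTop.zero_ne_top

theorem exists_log_norm_eq_sum_add_log_norm (hf : MeromorphicOn f (closedBall 0 s))
    (hord : ∀ u : closedBall (0 : ℂ) s, meromorphicOrderAt f u ≠ ⊤) :
    ∃ g : ℂ → ℂ, AnalyticOnNhd ℂ g (closedBall 0 s) ∧ (∀ z ∈ closedBall 0 s, g z ≠ 0) ∧
      (fun z => Real.log ‖f z‖) =ᶠ[codiscreteWithin (closedBall 0 s)]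
        (∑ u ∈ zerosPoles f s, (MeromorphicOn.divisor f (closedBall 0 s) u : ℝ) •
          fun z => Real.log ‖z - u‖) + fun z => Real.log ‖g z‖ := by
  obtain ⟨g, hg, hg0, hfg⟩ := hf.extract_zeros_poles hord
    ((MeromorphicOn.divisor f (closedBall 0 s)).finiteSupport (isCompact_closedBall 0 s))
  have hlog := MeromorphicOn.extract_zeros_poles_log hg0 hfg
  refine ⟨g, hg, fun z hz => hg0 ⟨z, hz⟩, ?_⟩
  rw [← finsum_divisor_smul]
  exact hlog

theorem poissonIntegral_log_norm_of_factorization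
    (hg : AnalyticOnNhd ℂ g (closedBall 0 s)) (hg0 : ∀ z ∈ closedBall 0 s, g z ≠ 0)
    (hfg : (fun z => Real.log ‖f z‖) =ᶠ[codiscreteWithin (closedBall 0 s)]
      (∑ u ∈ zerosPoles f s, (MeromorphicOn.divisor f (closedBall 0 s) u : ℝ) •
        fun z => Real.log ‖z - u‖) + fun z => Real.log ‖g z‖) (hw : w ∈ ball 0 s) :
    poissonIntegral s (fun z => Real.log ‖f z‖) w
      = ∑ u ∈ zerosPoles f s, (MeromorphicOn.divisor f (closedBall 0 s) u : ℝ) *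
        (Real.log ‖(s : ℂ) ^ 2 - (starRingEnd ℂ) u * w‖ - Real.log s) + Real.log ‖g w‖ := by
  have hs : 0 < s := pos_of_mem_ball hw
  have hsphere : sphere (0 : ℂ) |s| ⊆ closedBall 0 s := by
    rw [abs_of_pos hs]
    exact sphere_subset_closedBall
  have hlog_int : ∀ u, CircleIntegrable (fun z => Real.log ‖z - u‖) 0 s := fun u =>
    circleIntegrable_log_norm_sub_const s
  have hg_int : CircleIntegrable (fun z => Real.log ‖g z‖) 0 s :=
    (hg.mono hsphere).meromorphicOn.circleIntegrable_log_norm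
  have hfg_sphere : poissonIntegral s (fun z => Real.log ‖f z‖) w
      = poissonIntegral s ((∑ u ∈ zerosPoles f s,
        (MeromorphicOn.divisor f (closedBall 0 s) u : ℝ) •
          fun z => Real.log ‖z - u‖) + fun z => Real.log ‖g z‖) w := by
    refine Real.circleAverage_congr_codiscreteWithin ?_ hs.ne'
    filter_upwards [codiscreteWithin_mono hsphere hfg] with z hz
    rw [Pi.smul_apply', Pi.smul_apply', hz]
  have hg_harm : poissonIntegral s (fun z => Real.log ‖g z‖) w = Real.log ‖g w‖ :=
    InnerProductSpace.HarmonicOnNhd.circleAverage_poissonKernel_smul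
      (fun z hz => (hg z hz).harmonicAt_log_norm (hg0 z hz)) hw
  rw [hfg_sphere, poissonIntegral_add (CircleIntegrable.sum _ fun u _ => (hlog_int u).const_smul)
    hg_int hw, poissonIntegral_sum_smul _ (fun u _ => hlog_int u) hw, hg_harm]
  congr 1
  refine Finset.sum_congr rfl fun u hu => ?_
  rw [poissonIntegral_log_norm_sub (norm_le_of_mem_zerosPoles hu) hw]

theorem eventually_log_norm_eq_poissonJensen (hf : MeromorphicOn f (closedBall 0 s))
    (hord : ∀ u : closedBall (0 : ℂ) s, meromorphicOrderAt f u ≠ ⊤) :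
    ∀ᶠ w in codiscreteWithin (closedBall 0 s), w ∈ ball 0 s →
      Real.log ‖f w‖ = poissonJensen f s w := by
  obtain ⟨g, hg, hg0, hfg⟩ := exists_log_norm_eq_sum_add_log_norm hf hord
  filter_upwards [hfg, compl_finite_mem_codiscreteWithin (zerosPoles f s).finite_toSet]
    with w hfgw hwS hw
  have hfw : Real.log ‖f w‖ = ∑ u ∈ zerosPoles f s,
      (MeromorphicOn.divisor f (closedBall 0 s) u : ℝ) * Real.log ‖w - u‖ + Real.log ‖g w‖ := by
    simpa only [Pi.add_apply, Finset.sum_apply, Pi.smul_apply, smul_eq_mul] using hfgw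
  rw [hfw, poissonJensen, poissonIntegral_log_norm_of_factorization hg hg0 hfg hw,
    add_sub_right_comm, ← Finset.sum_sub_distrib]
  congr 1
  refine Finset.sum_congr rfl fun u hu => ?_
  have hwu : w ≠ u := fun h => hwS (h ▸ hu)
  rw [log_norm_canonicalFactor (norm_le_of_mem_zerosPoles hu) hw hwu, ← mul_sub,
    sub_sub_cancel]

theorem exists_finite_log_norm_eq_poissonJensen (hf : MeromorphicOn f (closedBall 0 s))
    (h0 : AnalyticAt ℂ f 0) (hf0 : f 0 ≠ 0) :
    ∃ B : Set ℂ, B.Finite ∧ ↑(zerosPoles f s) ⊆ B ∧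
      ∀ w ∈ ball 0 s, w ∉ B → Real.log ‖f w‖ = poissonJensen f s w := by
  have hPJ := (isCompact_closedBall (0 : ℂ) s).finite_sdiff_of_mem_codiscreteWithin
    (eventually_log_norm_eq_poissonJensen hf
      (meromorphicOrderAt_ne_top_of_apply_zero_ne_zero hf h0 hf0))
  refine ⟨_, hPJ.union (zerosPoles f s).finite_toSet, Set.subset_union_right,
    fun w hw hwB => ?_⟩
  by_contra h
  exact hwB (Or.inl ⟨ball_subset_closedBall hw, fun hmem => h (hmem hw)⟩)

end PoissonJensen

section FactorIncrementBound

variable {δ h d r : ℝ} {x : ℂ}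

theorem factorIncrementBound_nonneg (hδ : 0 ≤ δ) (hh : 0 ≤ h) (hd : 0 ≤ d) :
    0 ≤ factorIncrementBound δ h d x := by
  unfold factorIncrementBound
  positivity

theorem factorIncrementBound_anti {d' : ℝ} (hh : 0 ≤ h) (hd : 0 < d) (hdd' : d ≤ d') :
    factorIncrementBound δ h d' x ≤ factorIncrementBound δ h d x := by
  unfold factorIncrementBound
  gcongr

theorem circleIntegrable_factorIncrementBound_sub (hδ₀ : 0 ≤ δ) (hδ₁ : δ < 1) (hr : 0 < r)
    (h d : ℝ) (u : ℂ) :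
    CircleIntegrable (fun z => factorIncrementBound δ h d (z - u)) 0 r :=
  (circleIntegrable_norm_sub_rpow_neg u hr hδ₀ hδ₁).const_smul.add (circleIntegrable_const _ _ _)

theorem circleAverage_factorIncrementBound_sub_le (hδ₀ : 0 < δ) (hδ₁ : δ < 1) (hr : 0 < r)
    (hh : 0 ≤ h) (d : ℝ) (u : ℂ) :
    Real.circleAverage (fun z => factorIncrementBound δ h d (z - u)) 0 r
      ≤ h / d + h ^ δ / (δ * (1 - δ) * r ^ δ) := by
  have hint : CircleIntegrable (fun z => (h ^ δ / δ) • ‖z - u‖ ^ (-δ)) 0 r :=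
    (circleIntegrable_norm_sub_rpow_neg u hr hδ₀.le hδ₁).const_smul
  calc Real.circleAverage (fun z => factorIncrementBound δ h d (z - u)) 0 r
      = h ^ δ / δ * Real.circleAverage (fun z => ‖z - u‖ ^ (-δ)) 0 r + h / d := by
        simp only [factorIncrementBound, ← smul_eq_mul (h ^ δ / δ)]
        rw [Real.circleAverage_fun_add hint (circleIntegrable_const _ _ _),
          Real.circleAverage_fun_smul, Real.circleAverage_const]
    _ ≤ h ^ δ / δ * (r ^ (-δ) / (1 - δ)) + h / d := by
        gcongr
        exact circleAverage_norm_sub_rpow_neg_le u hr hδ₀.le hδ₁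
    _ = h / d + h ^ δ / (δ * (1 - δ) * r ^ δ) := by
        rw [Real.rpow_neg hr.le]
        have := (Real.rpow_pos_of_pos hr δ).ne'
        have := (sub_pos.2 hδ₁).ne'
        field_simp
        ring

theorem circleIntegrable_sum_mul_factorIncrementBound_sub (hδ₀ : 0 ≤ δ) (hδ₁ : δ < 1) (hr : 0 < r)
    (S : Finset ℂ) (p : ℂ → ℕ) (v : ℂ → ℂ) (h d : ℝ) :
    CircleIntegrable (fun z => ∑ u ∈ S, (p u : ℝ) * factorIncrementBound δ h d (z - v u)) 0 r :=
  CircleIntegrable.fun_sum S fun u _ =>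
    (circleIntegrable_factorIncrementBound_sub hδ₀ hδ₁ hr h d (v u)).const_smul

theorem circleAverage_sum_mul_factorIncrementBound_sub_le (hδ₀ : 0 < δ) (hδ₁ : δ < 1) (hr : 0 < r)
    (S : Finset ℂ) (p : ℂ → ℕ) (v : ℂ → ℂ) (hh : 0 ≤ h) (d : ℝ) :
    Real.circleAverage
        (fun z => ∑ u ∈ S, (p u : ℝ) * factorIncrementBound δ h d (z - v u)) 0 r
      ≤ (h / d + h ^ δ / (δ * (1 - δ) * r ^ δ)) * ∑ u ∈ S, (p u : ℝ) :=
  circleAverage_sum_mul_le (fun u _ => Nat.cast_nonneg (p u))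
    (fun u _ => circleIntegrable_factorIncrementBound_sub hδ₀.le hδ₁ hr h d (v u))
    fun u _ => circleAverage_factorIncrementBound_sub_le hδ₀ hδ₁ hr hh d (v u)

end FactorIncrementBound

section ShiftQuotient

variable {f : ℂ → ℂ} {c w z : ℂ} {δ r s : ℝ}

theorem poissonJensen_sub_le (hδ₀ : 0 < δ) (hδ₁ : δ ≤ 1) (hf : MeromorphicOn f (closedBall 0 s))
    (hw : w ∈ ball 0 s) (hz : z ∈ ball 0 s) (hwS : w ∉ zerosPoles f s)
    (hzS : z ∉ zerosPoles f s) :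
    poissonJensen f s w - poissonJensen f s z
      ≤ 2 * ‖w - z‖ * s / ((s - ‖w‖) * (s - ‖z‖))
          * Real.circleAverage (fun x => |Real.log ‖f x‖|) 0 s
        + ∑ u ∈ zerosPoles f s, ((poleOrd (fun z => (f z)⁻¹) u : ℝ)
            * factorIncrementBound δ ‖w - z‖ (s - ‖w‖) (z - u)
          + (poleOrd f u : ℝ) * factorIncrementBound δ ‖w - z‖ (s - ‖z‖) (w - u)) := by
  have hs : 0 < s := pos_of_mem_ball hw
  have hlog_int : CircleIntegrable (fun x => Real.log ‖f x‖) 0 s := by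
    refine MeromorphicOn.circleIntegrable_log_norm fun x hx => hf x (sphere_subset_closedBall ?_)
    rwa [abs_of_pos hs] at hx
  rw [poissonJensen, poissonJensen, sub_sub_sub_comm, ← Finset.sum_sub_distrib, sub_eq_add_neg,
    ← Finset.sum_neg_distrib]
  refine add_le_add ((le_abs_self _).trans (abs_poissonIntegral_sub_le hlog_int hw hz))
    (Finset.sum_le_sum fun u hu => ?_)
  have hus : ‖u‖ ≤ s := norm_le_of_mem_zerosPoles hu
  have hwu : w ≠ u := fun h => hwS (h ▸ hu)
  have hzu : z ≠ u := fun h => hzS (h ▸ hu)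
  have hzero := log_norm_canonicalFactor_sub_le hδ₀ hδ₁ hus hw hz hwu hzu
  have hpole := log_norm_canonicalFactor_sub_le hδ₀ hδ₁ hus hz hw hzu hwu
  rw [norm_sub_rev z w] at hpole
  rw [divisor_eq_of_mem_zerosPoles hf hu]
  calc -((poleOrd (fun z => (f z)⁻¹) u - poleOrd f u : ℝ) * Real.log ‖Complex.canonicalFactor s u w‖
          - (poleOrd (fun z => (f z)⁻¹) u - poleOrd f u) * Real.log ‖Complex.canonicalFactor s u z‖)
      = poleOrd (fun z => (f z)⁻¹) u * (Real.log ‖Complex.canonicalFactor s u z‖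
            - Real.log ‖Complex.canonicalFactor s u w‖)
          + poleOrd f u * (Real.log ‖Complex.canonicalFactor s u w‖
            - Real.log ‖Complex.canonicalFactor s u z‖) := by ring
    _ ≤ _ := by gcongr

/-- The majorant of `log⁺ |f(z + c) / f(z)|` on the circle `‖z‖ = r` that the Poisson–Jensen formula
gives on the disc `‖z‖ < s`. -/
noncomputable def shiftQuotientMajorant (f : ℂ → ℂ) (c : ℂ) (δ r s : ℝ) (z : ℂ) : ℝ :=
  2 * ‖c‖ * s / (s - r - ‖c‖) ^ 2 * Real.circleAverage (fun x => |Real.log ‖f x‖|) 0 s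
    + (∑ u ∈ zerosPoles f s, (poleOrd (fun z => (f z)⁻¹) u : ℝ)
        * factorIncrementBound δ ‖c‖ (s - r - ‖c‖) (z - u)
      + ∑ u ∈ zerosPoles f s, (poleOrd f u : ℝ)
        * factorIncrementBound δ ‖c‖ (s - r - ‖c‖) (z - (u - c)))

theorem shiftQuotientMajorant_nonneg (hδ : 0 ≤ δ) (hs₀ : 0 ≤ s) (hs : r + ‖c‖ < s) :
    0 ≤ shiftQuotientMajorant f c δ r s z := by
  have hbound : ∀ x, 0 ≤ factorIncrementBound δ ‖c‖ (s - r - ‖c‖) x := fun x =>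
    factorIncrementBound_nonneg hδ (norm_nonneg c) (by linarith)
  have havg : 0 ≤ Real.circleAverage (fun x => |Real.log ‖f x‖|) 0 s :=
    Real.circleAverage_nonneg_of_nonneg fun x _ => abs_nonneg _
  exact add_nonneg (by positivity)
    (add_nonneg (Finset.sum_nonneg fun u _ => mul_nonneg (Nat.cast_nonneg _) (hbound _))
      (Finset.sum_nonneg fun u _ => mul_nonneg (Nat.cast_nonneg _) (hbound _)))

theorem poissonJensen_add_sub_le (hδ₀ : 0 < δ) (hδ₁ : δ ≤ 1)
    (hf : MeromorphicOn f (closedBall 0 s)) (hs : r + ‖c‖ < s) (hz : ‖z‖ = r)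
    (hzS : z ∉ zerosPoles f s) (hzcS : z + c ∉ zerosPoles f s) :
    poissonJensen f s (z + c) - poissonJensen f s z ≤ shiftQuotientMajorant f c δ r s z := by
  have hzc : ‖z + c‖ ≤ r + ‖c‖ := hz ▸ norm_add_le z c
  have hc : 0 ≤ ‖c‖ := norm_nonneg c
  have hd : 0 < s - r - ‖c‖ := by linarith
  have hdz : s - r - ‖c‖ ≤ s - ‖z‖ := by linarith
  have hdzc : s - r - ‖c‖ ≤ s - ‖z + c‖ := by linarith
  have hzs : z ∈ ball 0 s := by rw [mem_ball_zero_iff]; linarith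
  have hzcs : z + c ∈ ball 0 s := by rw [mem_ball_zero_iff]; linarith
  have hs₀ : 0 < s := pos_of_mem_ball hzs
  have hshift : ∀ u : ℂ, z - (u - c) = z + c - u := fun u => by ring
  have havg : 0 ≤ Real.circleAverage (fun x => |Real.log ‖f x‖|) 0 s :=
    Real.circleAverage_nonneg_of_nonneg fun x _ => abs_nonneg _
  have hPJ := poissonJensen_sub_le hδ₀ hδ₁ hf hzcs hzs hzcS hzS
  simp only [add_sub_cancel_left] at hPJ
  refine hPJ.trans ?_
  rw [shiftQuotientMajorant, ← Finset.sum_add_distrib, sq]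
  gcongr with u
  · exact hd.le.trans hdzc
  · exact factorIncrementBound_anti hc hd hdzc
  · rw [hshift]
    exact factorIncrementBound_anti hc hd hdz

theorem exists_finite_logPlus_norm_shift_div_le (hδ₀ : 0 < δ) (hδ₁ : δ ≤ 1)
    (hf : MeromorphicOn f (closedBall 0 s)) (h0 : AnalyticAt ℂ f 0) (hf0 : f 0 ≠ 0)
    (hs : r + ‖c‖ < s) :
    ∃ B : Set ℂ, B.Finite ∧ ∀ z, ‖z‖ = r → z ∉ B →
      logPlus ‖f (z + c) / f z‖ ≤ shiftQuotientMajorant f c δ r s z := by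
  obtain ⟨B, hB, hSB, hPJ⟩ := exists_finite_log_norm_eq_poissonJensen hf h0 hf0
  refine ⟨B ∪ (fun z => z + c) ⁻¹' B, hB.union (hB.preimage (add_left_injective c).injOn), ?_⟩
  intro z hz hzB
  obtain ⟨hzB, hzcB⟩ : z ∉ B ∧ z + c ∉ B := by
    simpa only [Set.mem_union, Set.mem_preimage, not_or] using hzB
  have hc : 0 ≤ ‖c‖ := norm_nonneg c
  have hnonneg : 0 ≤ shiftQuotientMajorant f c δ r s z :=
    shiftQuotientMajorant_nonneg hδ₀.le (by linarith [norm_nonneg z]) hs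
  refine max_le ?_ hnonneg
  by_cases hquot : f (z + c) / f z = 0
  · rwa [hquot, norm_zero, Real.log_zero]
  obtain ⟨hfzc, hfz⟩ := div_ne_zero_iff.1 hquot
  have hzc : ‖z + c‖ ≤ r + ‖c‖ := hz ▸ norm_add_le z c
  rw [norm_div, Real.log_div (norm_ne_zero_iff.2 hfzc) (norm_ne_zero_iff.2 hfz),
    hPJ z (by rw [mem_ball_zero_iff]; linarith) hzB,
    hPJ (z + c) (by rw [mem_ball_zero_iff]; linarith) hzcB]
  exact poissonJensen_add_sub_le hδ₀ hδ₁ hf hs hz (fun h => hzB (hSB h)) fun h => hzcB (hSB h)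

theorem circleIntegrable_shiftQuotientMajorant (hδ₀ : 0 ≤ δ) (hδ₁ : δ < 1) (hr : 0 < r) :
    CircleIntegrable (shiftQuotientMajorant f c δ r s) 0 r :=
  (circleIntegrable_const _ _ _).add
    ((circleIntegrable_sum_mul_factorIncrementBound_sub hδ₀ hδ₁ hr _ _ (fun u => u) _ _).add
      (circleIntegrable_sum_mul_factorIncrementBound_sub hδ₀ hδ₁ hr _ _ (fun u => u - c) _ _))

theorem circleAverage_shiftQuotientMajorant_le (hδ₀ : 0 < δ) (hδ₁ : δ < 1) (hr : 0 < r)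
    (hf : MeromorphicOn f (closedBall 0 s)) :
    Real.circleAverage (shiftQuotientMajorant f c δ r s) 0 r
      ≤ 2 * ‖c‖ * s / (s - r - ‖c‖) ^ 2 * Real.circleAverage (fun x => |Real.log ‖f x‖|) 0 s
        + (‖c‖ / (s - r - ‖c‖) + ‖c‖ ^ δ / (δ * (1 - δ) * r ^ δ))
          * ((nevn f s : ℝ) + (nevn (fun z => (f z)⁻¹) s : ℝ)) := by
  have hint := fun (p : ℂ → ℕ) (v : ℂ → ℂ) => circleIntegrable_sum_mul_factorIncrementBound_sub
    hδ₀.le hδ₁ hr (zerosPoles f s) p v ‖c‖ (s - r - ‖c‖)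
  have hzeros_int := hint (poleOrd fun z => (f z)⁻¹) fun u => u
  have hpoles_int := hint (poleOrd f) fun u => u - c
  have havg := fun (p : ℂ → ℕ) (v : ℂ → ℂ) => circleAverage_sum_mul_factorIncrementBound_sub_le
    hδ₀ hδ₁ hr (zerosPoles f s) p v (norm_nonneg c) (s - r - ‖c‖)
  have hzeros := havg (poleOrd fun z => (f z)⁻¹) fun u => u
  have hpoles := havg (poleOrd f) fun u => u - c
  rw [← nevn_inv_eq_sum_zerosPoles hf] at hzeros
  rw [← nevn_eq_sum_zerosPoles hf] at hpoles
  refine (Real.circleAverage_add (circleIntegrable_const _ _ _)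
    (hzeros_int.add hpoles_int)).trans_le ?_
  rw [Real.circleAverage_const, Real.circleAverage_add hzeros_int hpoles_int,
    add_comm (nevn f s : ℝ), mul_add]
  gcongr

theorem meromorphicOn_shift_div (hf : MeromorphicOn f (closedBall 0 s)) (hs : r + ‖c‖ ≤ s) :
    MeromorphicOn (fun z => f (z + c) / f z) (closedBall 0 r) := by
  intro z hz
  have hz : ‖z‖ ≤ r := by simpa using hz
  have hzc : ‖z + c‖ ≤ s := (norm_add_le z c).trans (by linarith)
  have hshift : MeromorphicAt (fun z => f (z + c)) z :=
    (hf (z + c) (by simpa using hzc)).comp_analyticAt (g := fun z => z + c) (by fun_prop)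
  exact hshift.fun_div (hf z (by simpa using by linarith [norm_nonneg c]))

end ShiftQuotient

theorem proximity_shift_quotient_intermediate_bound_general {f : ℂ → ℂ} {c : ℂ} {δ r s : ℝ}
    (hf : MeromorphicOn f (closedBall 0 s)) (h0 : AnalyticAt ℂ f 0) (hf0 : f 0 ≠ 0)
    (hδ₀ : 0 < δ) (hδ₁ : δ < 1) (hr : 0 < r) (hs : r + ‖c‖ < s) :
    nevm (fun z => f (z + c) / f z) r ≤
      (‖c‖ / (s - r - ‖c‖) + ‖c‖ ^ δ / (δ * (1 - δ) * r ^ δ)) *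
          ((nevn f s : ℝ) + (nevn (fun z => (f z)⁻¹) s : ℝ)) +
        4 * ‖c‖ * s / (s - r - ‖c‖) ^ 2 * (nevT f s + logPlus (1 / ‖f 0‖)) := by
  have hs₀ : 0 < s := by linarith [norm_nonneg c]
  obtain ⟨B, hB, hle⟩ := exists_finite_logPlus_norm_shift_div_le hδ₀ hδ₁.le hf h0 hf0 hs
  have hmero : MeromorphicOn (fun z => f (z + c) / f z) (sphere 0 |r|) := by
    rw [abs_of_pos hr]
    exact fun z hz => meromorphicOn_shift_div hf hs.le z (sphere_subset_closedBall hz)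
  have havg : nevm (fun z => f (z + c) / f z) r
      ≤ Real.circleAverage (shiftQuotientMajorant f c δ r s) 0 r := by
    rw [nevm_eq_circleAverage]
    refine circleAverage_mono_off_countable hr.ne' (circleIntegrable_logPlus_norm hmero)
      (circleIntegrable_shiftQuotientMajorant hδ₀.le hδ₁ hr) hB.countable fun z hz => hle z ?_
    simpa [abs_of_pos hr] using hz
  have hJensen : 2 * ‖c‖ * s / (s - r - ‖c‖) ^ 2
        * Real.circleAverage (fun x => |Real.log ‖f x‖|) 0 s
      ≤ 4 * ‖c‖ * s / (s - r - ‖c‖) ^ 2 * (nevT f s + logPlus (1 / ‖f 0‖)) := by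
    refine (mul_le_mul_of_nonneg_left (circleAverage_abs_log_norm_le hs₀ hf h0 hf0)
      (by positivity)).trans_eq ?_
    ring
  linarith [circleAverage_shiftQuotientMajorant_le (c := c) (s := s) hδ₀ hδ₁ hr hf]

/-- Intermediate estimate in the key lemma: for `f` meromorphic with `f(0) ≠ 0, ∞`,
`c ∈ ℂ`, `0 < δ < 1`, `r ≥ 1` and `s > r + |c|`,
`m(r, f(z+c)/f(z)) ≤ (2|c|/(s−r−|c|) + 2|c|^δ/(δ(1−δ)r^δ)) (n(s,f) + n(s,1/f))
  + (4|c|s/(s−r−|c|)²) (T(s,f) + log⁺(1/|f(0)|))`,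
where `n(s,f)` and `n(s,1/f)` count the poles and zeros of `f` in `|z| ≤ s` with
multiplicity. -/
theorem proximity_shift_quotient_intermediate_bound (f : ℂ → ℂ)
    (hf : MeromorphicOn f Set.univ) (h0 : AnalyticAt ℂ f 0) (hf0 : f 0 ≠ 0)
    (c : ℂ) (δ r s : ℝ) (hδ0 : 0 < δ) (hδ1 : δ < 1) (hr : 1 ≤ r) (hs : r + ‖c‖ < s) :
    nevm (fun z => f (z + c) / f z) r ≤
      (2 * ‖c‖ / (s - r - ‖c‖) + 2 * ‖c‖ ^ δ / (δ * (1 - δ) * r ^ δ)) *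
          ((nevn f s : ℝ) + (nevn (fun z => (f z)⁻¹) s : ℝ)) +
        4 * ‖c‖ * s / (s - r - ‖c‖) ^ 2 * (nevT f s + logPlus (1 / ‖f 0‖)) := by
  have hd : 0 < s - r - ‖c‖ := by linarith
  have : 0 < 1 - δ := by linarith
  refine (proximity_shift_quotient_intermediate_bound_general (fun x _ => hf x trivial) h0 hf0
    hδ0 hδ1 (by linarith) hs).trans ?_
  gcongr <;> linarith [norm_nonneg c, Real.rpow_nonneg (norm_nonneg c) δ]
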